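/- arXiv:1802.06109 — 2 statements merged into one kernel-verified Lean document; each statement's English description precedes it below -/
import Mathlib

section
/- Fix an integer n ≥ 1. Define E_{−n} := {(f,g) ∈ T × T : g − f·S^n is compact} and χ_{−n} := (1, S^n S^{*n}). Then χ_{−n} is a self-adjoint idempotent belonging to B̄, E_{−n} is a left B̄-submodule of T × T under the componentwise action, and the map Ψ_{−n}(f,g) := (f, g S^{*n}) is a well-defined bijection from E_{−n} onto B̄χ_{−n} := {x·χ_{−n} : x ∈ B̄} satisfying Ψ_{−n}((a,b)·(f,g)) = (a,b)·Ψ_{−n}(f,g) for all (a,b) ∈ B̄ and (f,g) ∈ E_{−n}. Hence the left B̄-modules E_{−n} (the fibre-product quantum line bundle of winding number −n) and B̄χ_{−n} are isomorphic. -/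
/-!
The shift satisfies `S* S = 1`, so `S*ⁿ Sⁿ = 1`, and `1 - S S*` is the rank-one projection onto
`e 0`. Writing `1 - Sⁿ⁺¹ S*ⁿ⁺¹ = (1 - S S*) + S (1 - Sⁿ S*ⁿ) S*` shows by induction that
`1 - Sⁿ S*ⁿ` is compact, so `χ` is a projection in `Bbar`. Since `S*ⁿ` and `Sⁿ` are both in `T` and
compact operators form an ideal, `(f, g) ↦ (f, g S*ⁿ)` and `(a, b) ↦ (a, b Sⁿ)` carry the
compactness conditions defining `E` and `Bbar` into each other; `S*ⁿ Sⁿ = 1` makes the first map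
injective and, together with the second, onto `Bbar χ`.
-/

section Shift

variable {H : Type*} [NormedAddCommGroup H] [InnerProductSpace ℂ H]

/-- Bounded operators agreeing on a Hilbert basis are equal. -/
lemma clm_ext_hilbertBasis (e : HilbertBasis ℕ ℂ H) {A B : H →L[ℂ] H}
    (h : ∀ k, A (e k) = B (e k)) : A = B := by
  refine ContinuousLinearMap.ext_on (s := Set.range e) ?_ ?_
  · exact Submodule.dense_iff_topologicalClosure_eq_top.mpr e.dense_span
  · rintro _ ⟨k, rfl⟩
    exact h k

lemma isCompactOperator_mul_left (A : H →L[ℂ] H) {K : H →L[ℂ] H} (hK : IsCompactOperator ⇑K) :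
    IsCompactOperator ⇑(A * K) :=
  hK.clm_comp A

lemma isCompactOperator_mul_right {K : H →L[ℂ] H} (hK : IsCompactOperator ⇑K) (A : H →L[ℂ] H) :
    IsCompactOperator ⇑(K * A) :=
  hK.comp_clm A

variable [CompleteSpace H]

lemma star_shift_apply_succ (e : HilbertBasis ℕ ℂ H) {S : H →L[ℂ] H}
    (hS : ∀ k : ℕ, S (e k) = e (k + 1)) (k : ℕ) : star S (e (k + 1)) = e k := by
  apply e.repr.injective
  ext i
  rw [e.repr_apply_apply, e.repr_apply_apply, ContinuousLinearMap.star_eq_adjoint,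
    ContinuousLinearMap.adjoint_inner_right, hS, orthonormal_iff_ite.mp e.orthonormal,
    orthonormal_iff_ite.mp e.orthonormal]
  simp

lemma star_shift_apply_zero (e : HilbertBasis ℕ ℂ H) {S : H →L[ℂ] H}
    (hS : ∀ k : ℕ, S (e k) = e (k + 1)) : star S (e 0) = 0 := by
  apply e.repr.injective
  ext i
  rw [e.repr_apply_apply, ContinuousLinearMap.star_eq_adjoint,
    ContinuousLinearMap.adjoint_inner_right, hS, orthonormal_iff_ite.mp e.orthonormal]
  simp

lemma star_shift_mul_shift (e : HilbertBasis ℕ ℂ H) {S : H →L[ℂ] H}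
    (hS : ∀ k : ℕ, S (e k) = e (k + 1)) : star S * S = 1 :=
  clm_ext_hilbertBasis e fun k => by
    simp [hS, star_shift_apply_succ e hS]

lemma star_pow_mul_pow {S : H →L[ℂ] H} (h : star S * S = 1) (n : ℕ) :
    star S ^ n * S ^ n = 1 := by
  induction n with
  | zero => simp
  | succ n ih =>
    rw [pow_succ, pow_succ', mul_assoc, ← mul_assoc (star S), h, one_mul, ih]

lemma one_sub_shift_mul_star_shift (e : HilbertBasis ℕ ℂ H) {S : H →L[ℂ] H}
    (hS : ∀ k : ℕ, S (e k) = e (k + 1)) :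
    1 - S * star S = (innerSL ℂ (e 0)).smulRight (e 0) := by
  refine clm_ext_hilbertBasis e fun k => ?_
  have ho := orthonormal_iff_ite.mp e.orthonormal 0 k
  cases k with
  | zero => simp [star_shift_apply_zero e hS, e.orthonormal.norm_eq_one]
  | succ k => simp [star_shift_apply_succ e hS, hS, ho]

lemma isCompactOperator_one_sub_pow (e : HilbertBasis ℕ ℂ H) {S : H →L[ℂ] H}
    (hS : ∀ k : ℕ, S (e k) = e (k + 1)) (n : ℕ) :
    IsCompactOperator ⇑(1 - S ^ n * star S ^ n) := by
  have h1 : IsCompactOperator ⇑(1 - S * star S) := by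
    rw [one_sub_shift_mul_star_shift e hS]
    -- The rank-one operator factors through the locally compact space `ℂ`.
    have hid : IsCompactOperator (id : ℂ → ℂ) := isCompactOperator_id
    exact (hid.comp_clm (innerSL ℂ (e 0))).clm_comp
      ((ContinuousLinearMap.id ℂ ℂ).smulRight (e 0))
  induction n with
  | zero => simpa using isCompactOperator_zero
  | succ n ih =>
    have key : 1 - S ^ (n + 1) * star S ^ (n + 1)
        = (1 - S * star S) + S * (1 - S ^ n * star S ^ n) * star S := by
      rw [pow_succ', pow_succ]
      noncomm_ring
    rw [key]
    exact h1.add (isCompactOperator_mul_right (isCompactOperator_mul_left S ih) (star S))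

end Shift

/-- For `n ≥ 1`, with `T` the Toeplitz algebra, `B̄ = {(a,b) ∈ T × T : a - b
compact}`, `E_{-n} = {(f,g) ∈ T × T : g - f·S^n compact}` and `χ_{-n} = (1, S^n S^{*n})`:
`χ_{-n}` is a self-adjoint idempotent in `B̄`, `E_{-n}` is a left `B̄`-submodule of `T × T`, and
`Ψ_{-n} (f,g) = (f, g S^{*n})` is a `B̄`-linear bijection of `E_{-n}` onto `B̄·χ_{-n}`.  Hence
the left `B̄`-modules `E_{-n}` and `B̄χ_{-n}` are isomorphic. -/
theorem statement1
    {H : Type*} [NormedAddCommGroup H] [InnerProductSpace ℂ H] [CompleteSpace H]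
    (e : HilbertBasis ℕ ℂ H) (S : H →L[ℂ] H)
    (hS : ∀ k : ℕ, S (e k) = e (k + 1)) (n : ℕ) (hn : 1 ≤ n)
    (T : StarSubalgebra ℂ (H →L[ℂ] H)) (hT : T = StarAlgebra.elemental ℂ S)
    (Bbar : Set ((H →L[ℂ] H) × (H →L[ℂ] H)))
    (hBbar : Bbar = {p : (H →L[ℂ] H) × (H →L[ℂ] H) | p.1 ∈ T ∧ p.2 ∈ T ∧ IsCompactOperator ⇑(p.1 - p.2)})
    (E : Set ((H →L[ℂ] H) × (H →L[ℂ] H)))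
    (hE : E = {p : (H →L[ℂ] H) × (H →L[ℂ] H) | p.1 ∈ T ∧ p.2 ∈ T ∧ IsCompactOperator ⇑(p.2 - p.1 * S ^ n)})
    (χ : (H →L[ℂ] H) × (H →L[ℂ] H)) (hχ : χ = (1, S ^ n * (star S) ^ n)) :
    (star χ = χ ∧ χ * χ = χ ∧ χ ∈ Bbar) ∧
    ((0 : (H →L[ℂ] H) × (H →L[ℂ] H)) ∈ E ∧
      (∀ p ∈ E, ∀ r ∈ E, p + r ∈ E) ∧
      (∀ a ∈ Bbar, ∀ p ∈ E, (a.1 * p.1, a.2 * p.2) ∈ E)) ∧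
    Set.BijOn (fun p : (H →L[ℂ] H) × (H →L[ℂ] H) => (p.1, p.2 * (star S) ^ n))
      E {x | ∃ a ∈ Bbar, x = (a.1 * χ.1, a.2 * χ.2)} ∧
    (∀ a ∈ Bbar, ∀ p ∈ E,
      (a.1 * p.1, a.2 * p.2 * (star S) ^ n) = (a.1 * p.1, a.2 * (p.2 * (star S) ^ n))) := by
  have hVV : star S ^ n * S ^ n = 1 := star_pow_mul_pow (star_shift_mul_shift e hS) n
  have hcomp := isCompactOperator_one_sub_pow e hS n
  have hST : S ∈ T := hT ▸ StarAlgebra.elemental.self_mem ℂ S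
  have hVT : S ^ n ∈ T := pow_mem hST n
  have hWT : star S ^ n ∈ T := pow_mem (star_mem hST) n
  have hstar : star (S ^ n) = star S ^ n := star_pow S n
  generalize S ^ n = V at *
  generalize star S ^ n = W at *
  subst hBbar hE hχ
  have hidem : V * W * (V * W) = V * W := by
    rw [mul_assoc, ← mul_assoc W, hVV, one_mul]
  refine ⟨⟨?_, ?_, one_mem T, mul_mem hVT hWT, hcomp⟩, ⟨?_, ?_, ?_⟩, ⟨?_, ?_, ?_⟩, ?_⟩
  · ext1
    · simp
    · simp [← hstar]
  · ext1
    · simp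
    · exact hidem
  · refine ⟨zero_mem T, zero_mem T, ?_⟩
    simpa using isCompactOperator_zero
  · rintro ⟨f, g⟩ ⟨hf, hg, hfg⟩ ⟨f', g'⟩ ⟨hf', hg', hfg'⟩
    refine ⟨add_mem hf hf', add_mem hg hg', ?_⟩
    have key : (g + g') - (f + f') * V = (g - f * V) + (g' - f' * V) := by noncomm_ring
    exact key ▸ hfg.add hfg'
  · rintro ⟨a, b⟩ ⟨ha, hb, hab⟩ ⟨f, g⟩ ⟨hf, hg, hfg⟩
    refine ⟨mul_mem ha hf, mul_mem hb hg, ?_⟩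
    have key : b * g - a * f * V = b * (g - f * V) - (a - b) * (f * V) := by noncomm_ring
    exact key ▸ (isCompactOperator_mul_left b hfg).sub (isCompactOperator_mul_right hab (f * V))
  · rintro ⟨f, g⟩ ⟨hf, hg, hfg⟩
    refine ⟨(f, g * W), ⟨hf, mul_mem hg hWT, ?_⟩, ?_⟩
    · have key : f - g * W = f * (1 - V * W) - (g - f * V) * W := by noncomm_ring
      exact key ▸ (isCompactOperator_mul_left f hcomp).sub (isCompactOperator_mul_right hfg W)
    · have key : g * W * (V * W) = g * W := by
        rw [mul_assoc, ← mul_assoc W, hVV, one_mul]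
      simp [key]
  · rintro ⟨f, g⟩ - ⟨f', g'⟩ - h
    obtain ⟨h1, h2⟩ := Prod.mk.inj h
    have h3 := congrArg (· * V) h2
    simp only [mul_assoc, hVV, mul_one] at h3
    exact Prod.ext h1 h3
  · rintro _ ⟨⟨a, b⟩, ⟨ha, hb, hab⟩, rfl⟩
    refine ⟨(a, b * V), ⟨ha, mul_mem hb hVT, ?_⟩, ?_⟩
    · have key : b * V - a * V = -((a - b) * V) := by noncomm_ring
      exact key ▸ (isCompactOperator_mul_right hab V).neg
    · simp [mul_assoc]
  · intro a _ p _
    rw [mul_assoc]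
end

section
/- Fix q ∈ (0,1) and s ∈ (0,1]. Define bounded operators on ℓ²(ℕ) by ζ₁ e_n = −s² q^{2n+2} e_n, ζ₂ e_n = q^{2n+2} e_n, η₁ e_n = s·√((1 − q^{2n+2})(1 + s² q^{2n+2})) e_{n+1}, and η₂ e_n = √((1 − q^{2n+2})(s² + q^{2n+2})) e_{n+1}. Then for j = 1, 2: ζ_j* = ζ_j, ζ_j η_j = q² η_j ζ_j, η_j* η_j = (1 − ζ_j)(s² + ζ_j), and η_j η_j* = (1 − q^{−2} ζ_j)(s² + q^{−2} ζ_j). Moreover ζ₁ and ζ₂ are compact, η_j − s·S is compact for j = 1, 2 (hence all four operators belong to the Toeplitz algebra T), and the pairs ζ := (ζ₁, ζ₂) and η := (η₁, η₂) belong to B̄. Thus ζ and η satisfy the defining relations of the generators ζ_s, η_s of the generic Podleś sphere inside the glued quantum 2-sphere C*-algebra B̄. -/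
/-!
All identities are checked on the basis vectors `e n`, which suffices by `op_ext`; the adjoint of a
weighted shift is computed in `star_weighted_zero` and `star_weighted_succ`.

For compactness and membership in the Toeplitz algebra, note that an operator of the form
`e n ↦ d n • e (n + k)` with `d` absolutely summable is the norm-convergent sum of the rank-one
operators `d n • |e (n + k)⟩⟨e n|`. Each of these is compact, and lies in the Toeplitz algebra since
`|e m⟩⟨e n| = S ^ m (1 - S S*) (S*) ^ n`; both properties are preserved by norm limits
(`compact_and_mem_of_summable`). This applies to `ζ_j` (with `k = 0`) and to `η_j - s • S`
(with `k = 1`), because their weights are `O(q ^ (2 n + 2))`; for the latter this follows from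
`|√u - s| ≤ |u - s²| / s`.
-/

open InnerProductSpace

set_option linter.unusedSectionVars false

section Podles

variable {H : Type*} [NormedAddCommGroup H] [InnerProductSpace ℂ H] [CompleteSpace H]

lemma op_ext (e : HilbertBasis ℕ ℂ H) {A B : H →L[ℂ] H} (h : ∀ n, A (e n) = B (e n)) : A = B := by
  refine ContinuousLinearMap.ext_on
    (Submodule.dense_iff_topologicalClosure_eq_top.2 e.dense_span) ?_
  rintro _ ⟨n, rfl⟩
  exact h n

lemma vec_ext (e : HilbertBasis ℕ ℂ H) {x y : H} (h : ∀ n, inner ℂ (e n) x = inner ℂ (e n) y) :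
    x = y := by
  apply e.repr.injective
  ext n
  simpa [HilbertBasis.repr_apply_apply] using h n

lemma inner_basis (e : HilbertBasis ℕ ℂ H) (m n : ℕ) :
    inner ℂ (e m) (e n) = if m = n then (1 : ℂ) else 0 :=
  (orthonormal_iff_ite.1 e.orthonormal) m n

lemma star_diag (e : HilbertBasis ℕ ℂ H) {A : H →L[ℂ] H} (d : ℕ → ℝ)
    (h : ∀ n, A (e n) = (d n : ℂ) • e n) : star A = A := by
  refine op_ext e fun n => vec_ext e fun m => ?_
  rw [ContinuousLinearMap.star_eq_adjoint, ContinuousLinearMap.adjoint_inner_right, h, h,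
    inner_smul_left, inner_smul_right, inner_basis]
  split_ifs with hmn
  · simp [hmn]
  · simp

lemma star_weighted_zero (e : HilbertBasis ℕ ℂ H) {A : H →L[ℂ] H} (w : ℕ → ℝ)
    (h : ∀ n, A (e n) = (w n : ℂ) • e (n + 1)) : (star A) (e 0) = 0 := by
  refine vec_ext e fun m => ?_
  rw [ContinuousLinearMap.star_eq_adjoint, ContinuousLinearMap.adjoint_inner_right, h,
    inner_smul_left, inner_basis]
  simp

lemma star_weighted_succ (e : HilbertBasis ℕ ℂ H) {A : H →L[ℂ] H} (w : ℕ → ℝ)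
    (h : ∀ n, A (e n) = (w n : ℂ) • e (n + 1)) (n : ℕ) :
    (star A) (e (n + 1)) = (w n : ℂ) • e n := by
  refine vec_ext e fun m => ?_
  rw [ContinuousLinearMap.star_eq_adjoint, ContinuousLinearMap.adjoint_inner_right, h,
    inner_smul_left, inner_smul_right, inner_basis, inner_basis]
  by_cases hmn : m = n
  · simp [hmn]
  · simp [hmn]

lemma shift_pow_apply (e : HilbertBasis ℕ ℂ H) {S : H →L[ℂ] H} (hS : ∀ n, S (e n) = e (n + 1))
    (m k : ℕ) : (S ^ m) (e k) = e (k + m) := by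
  induction m with
  | zero => simp
  | succ m ih => rw [pow_succ', mul_apply_eq_comp, ih, hS]; rfl

lemma star_shift_zero (e : HilbertBasis ℕ ℂ H) {S : H →L[ℂ] H} (hS : ∀ n, S (e n) = e (n + 1)) :
    (star S) (e 0) = 0 :=
  star_weighted_zero e (fun _ => 1) (by simpa using hS)

lemma star_shift_succ (e : HilbertBasis ℕ ℂ H) {S : H →L[ℂ] H} (hS : ∀ n, S (e n) = e (n + 1))
    (n : ℕ) : (star S) (e (n + 1)) = e n := by
  simpa using star_weighted_succ e (fun _ => 1) (by simpa using hS) n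

lemma star_shift_pow_apply (e : HilbertBasis ℕ ℂ H) {S : H →L[ℂ] H}
    (hS : ∀ n, S (e n) = e (n + 1)) (m k : ℕ) :
    (star S ^ m) (e k) = if m ≤ k then e (k - m) else 0 := by
  induction m with
  | zero => simp
  | succ m ih =>
    rw [pow_succ', mul_apply_eq_comp, ih]
    by_cases h : m + 1 ≤ k
    · obtain ⟨j, rfl⟩ := Nat.exists_eq_add_of_le h
      rw [if_pos (by omega), if_pos h, show m + 1 + j - m = j + 1 by omega,
        show m + 1 + j - (m + 1) = j by omega, star_shift_succ e hS]
    · rw [if_neg h]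
      by_cases h' : m ≤ k
      · rw [if_pos h', show k - m = 0 by omega, star_shift_zero e hS]
      · rw [if_neg h', map_zero]

/-- The matrix units of the basis are words in the shift and its adjoint, `1 - S S*` being the
projection onto the span of `e 0`. -/
lemma rankOne_eq (e : HilbertBasis ℕ ℂ H) {S : H →L[ℂ] H} (hS : ∀ n, S (e n) = e (n + 1))
    (m n : ℕ) : rankOne ℂ (e m) (e n) = S ^ m * (1 - S * star S) * star S ^ n := by
  refine op_ext e fun k => ?_
  rw [rankOne_apply, inner_basis, mul_apply_eq_comp, mul_apply_eq_comp,
    star_shift_pow_apply e hS]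
  rcases lt_trichotomy n k with h | h | h
  · obtain ⟨j, rfl⟩ := Nat.exists_eq_add_of_lt h
    rw [if_neg (by omega), if_pos (by omega), show n + j + 1 - n = j + 1 by omega]
    simp [star_shift_succ e hS, hS]
  · subst h
    simp [star_shift_zero e hS, shift_pow_apply e hS]
  · rw [if_neg (by omega), if_neg (by omega)]
    simp

lemma rankOne_mem (e : HilbertBasis ℕ ℂ H) {S : H →L[ℂ] H} (hS : ∀ n, S (e n) = e (n + 1))
    (m n : ℕ) : rankOne ℂ (e m) (e n) ∈ StarAlgebra.elemental ℂ S := by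
  have h := StarAlgebra.elemental.self_mem ℂ S
  rw [rankOne_eq e hS]
  exact mul_mem (mul_mem (pow_mem h m) (sub_mem (one_mem _) (mul_mem h (star_mem h))))
    (pow_mem (star_mem h) n)

lemma rankOne_compact (x y : H) : IsCompactOperator (rankOne ℂ x y) := by
  rw [rankOne_def']
  exact (isCompactOperator_of_locallyCompactSpace_dom (innerSL ℂ y)).clm_comp
    (ContinuousLinearMap.toSpanSingleton ℂ x)

/-- An operator `e n ↦ d n • e (n + k)` with summable weights is the norm-convergent sum of the
multiples `d n • |e (n + k)⟩⟨e n|` of matrix units. -/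
lemma compact_and_mem_of_summable (e : HilbertBasis ℕ ℂ H) {S : H →L[ℂ] H}
    (hS : ∀ n, S (e n) = e (n + 1)) {A : H →L[ℂ] H} (d : ℕ → ℝ) (k : ℕ)
    (hA : ∀ n, A (e n) = (d n : ℂ) • e (n + k)) (hd : Summable fun n => |d n|) :
    IsCompactOperator A ∧ A ∈ StarAlgebra.elemental ℂ S := by
  have hsum : Summable fun n => (d n : ℂ) • rankOne ℂ (e (n + k)) (e n) := by
    refine Summable.of_norm ?_
    simpa [norm_smul, norm_rankOne, e.orthonormal.1] using hd
  have hAsum : HasSum (fun n => (d n : ℂ) • rankOne ℂ (e (n + k)) (e n)) A := by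
    convert hsum.hasSum using 1
    refine op_ext e fun m => ?_
    have h1 := hsum.hasSum.mapL (ContinuousLinearMap.apply ℂ H (e m))
    refine HasSum.unique ?_ h1
    convert hasSum_ite_eq m (A (e m)) using 2 with n
    by_cases h : n = m
    · subst h
      simp [hA, rankOne_apply, e.orthonormal.1]
    · simp [h, rankOne_apply, inner_basis]
  constructor
  · refine isClosed_setOfPred_isCompactOperator.mem_of_tendsto hAsum (.of_forall fun F => ?_)
    exact (compactOperator (RingHom.id ℂ) H H).sum_mem
      fun n _ => (rankOne_compact (e (n + k)) (e n)).smul (d n : ℂ)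
  · refine (StarAlgebra.elemental.isClosed ℂ S).mem_of_tendsto hAsum (.of_forall fun F => ?_)
    exact sum_mem fun n _ => (StarAlgebra.elemental ℂ S).smul_mem (rankOne_mem e hS _ _) _

/-- The four algebraic relations for a diagonal operator and a weighted shift, reduced to scalar
identities between the eigenvalues `d n` and the weights `w n`. -/
lemma relations (e : HilbertBasis ℕ ℂ H) {Z E : H →L[ℂ] H} (d w : ℕ → ℝ) (q s : ℝ) (hq : q ≠ 0)
    (hZ : ∀ n, Z (e n) = (d n : ℂ) • e n) (hE : ∀ n, E (e n) = (w n : ℂ) • e (n + 1))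
    (hd : ∀ n, d (n + 1) = q ^ 2 * d n) (hw : ∀ n, w n ^ 2 = (1 - d n) * (s ^ 2 + d n))
    (h0 : (1 - (q ^ 2)⁻¹ * d 0) * (s ^ 2 + (q ^ 2)⁻¹ * d 0) = 0) :
    star Z = Z ∧ Z * E = ((q : ℂ) ^ 2) • (E * Z) ∧
    star E * E = (1 - Z) * (((s ^ 2 : ℝ) : ℂ) • (1 : H →L[ℂ] H) + Z) ∧
    E * star E = (1 - (((q : ℂ) ^ 2)⁻¹) • Z) *
        (((s ^ 2 : ℝ) : ℂ) • (1 : H →L[ℂ] H) + (((q : ℂ) ^ 2)⁻¹) • Z) := by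
  have hwC : ∀ n, (w n : ℂ) ^ 2 = (1 - d n) * (s ^ 2 + d n) := fun n => by exact_mod_cast hw n
  have hqC : (q : ℂ) ≠ 0 := by exact_mod_cast hq
  refine ⟨star_diag e d hZ, op_ext e fun n => ?_, op_ext e fun n => ?_, op_ext e fun n => ?_⟩
  · simp only [mul_apply_eq_comp, smul_apply, hE, hZ, map_smul, hd,
      smul_smul]
    congr 1
    push_cast
    ring
  · have : (star E * E) (e n) = ((w n : ℂ) ^ 2) • e n := by
      simp only [mul_apply_eq_comp, hE, map_smul, star_weighted_succ e w hE, smul_smul,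
        sq]
    rw [this, hwC]
    simp only [mul_apply_eq_comp, smul_apply,
      add_apply, sub_apply, one_apply_eq_self,
      hZ, map_smul, map_add]
    push_cast
    module
  · have hR : ((1 - (((q : ℂ) ^ 2)⁻¹) • Z) *
        (((s ^ 2 : ℝ) : ℂ) • (1 : H →L[ℂ] H) + (((q : ℂ) ^ 2)⁻¹) • Z)) (e n) =
        ((1 - ((q : ℂ) ^ 2)⁻¹ * d n) * ((s : ℂ) ^ 2 + ((q : ℂ) ^ 2)⁻¹ * d n)) • e n := by
      simp only [mul_apply_eq_comp, smul_apply,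
        add_apply, sub_apply,
        one_apply_eq_self, hZ, map_smul, map_add]
      push_cast
      module
    rw [hR, mul_apply_eq_comp]
    cases n with
    | zero =>
      have h0C : (1 - ((q : ℂ) ^ 2)⁻¹ * d 0) * ((s : ℂ) ^ 2 + ((q : ℂ) ^ 2)⁻¹ * d 0) = 0 := by
        exact_mod_cast h0
      rw [star_weighted_zero e w hE, h0C, map_zero, zero_smul]
    | succ n =>
      rw [star_weighted_succ e w hE, map_smul, hE, smul_smul, ← sq, hwC, hd]
      push_cast
      rw [inv_mul_cancel_left₀ (pow_ne_zero 2 hqC)]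

end Podles

lemma abs_sqrt_sub_le {u s : ℝ} (hu : 0 ≤ u) (hs : 0 < s) : |√u - s| ≤ |u - s ^ 2| / s := by
  have h : u - s ^ 2 = (√u - s) * (√u + s) := by
    have := Real.sq_sqrt hu
    linear_combination -this
  rw [le_div_iff₀ hs, h, abs_mul, abs_of_nonneg (a := √u + s) (by positivity)]
  gcongr
  linarith [Real.sqrt_nonneg u]

/-- For `q ∈ (0,1)`, `s ∈ (0,1]`, the concrete operators
`ζ₁ e_n = -s² q^{2n+2} e_n`, `ζ₂ e_n = q^{2n+2} e_n`,
`η₁ e_n = s √((1-q^{2n+2})(1+s²q^{2n+2})) e_{n+1}`,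
`η₂ e_n = √((1-q^{2n+2})(s²+q^{2n+2})) e_{n+1}` satisfy the defining relations of the
generators `ζ_s`, `η_s` of the generic Podleś sphere, the `ζ_j` are compact, `η_j - s·S` is
compact, all four operators belong to the Toeplitz algebra `T`, and the pairs
`(ζ₁, ζ₂)`, `(η₁, η₂)` belong to `B̄`. -/
theorem statement5
    {H : Type*} [NormedAddCommGroup H] [InnerProductSpace ℂ H] [CompleteSpace H]
    (e : HilbertBasis ℕ ℂ H) (S : H →L[ℂ] H)
    (hS : ∀ n : ℕ, S (e n) = e (n + 1))
    (q s : ℝ) (hq : q ∈ Set.Ioo (0 : ℝ) 1) (hs : s ∈ Set.Ioc (0 : ℝ) 1)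
    (ζ₁ ζ₂ η₁ η₂ : H →L[ℂ] H)
    (hζ₁ : ∀ n : ℕ, ζ₁ (e n) = ((-(s ^ 2) * q ^ (2 * n + 2) : ℝ) : ℂ) • e n)
    (hζ₂ : ∀ n : ℕ, ζ₂ (e n) = ((q ^ (2 * n + 2) : ℝ) : ℂ) • e n)
    (hη₁ : ∀ n : ℕ, η₁ (e n) =
      ((s * Real.sqrt ((1 - q ^ (2 * n + 2)) * (1 + s ^ 2 * q ^ (2 * n + 2))) : ℝ) : ℂ) •
        e (n + 1))
    (hη₂ : ∀ n : ℕ, η₂ (e n) =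
      ((Real.sqrt ((1 - q ^ (2 * n + 2)) * (s ^ 2 + q ^ (2 * n + 2))) : ℝ) : ℂ) • e (n + 1)) :
    (star ζ₁ = ζ₁ ∧ star ζ₂ = ζ₂) ∧
    (ζ₁ * η₁ = ((q : ℂ) ^ 2) • (η₁ * ζ₁) ∧ ζ₂ * η₂ = ((q : ℂ) ^ 2) • (η₂ * ζ₂)) ∧
    (star η₁ * η₁ = (1 - ζ₁) * (((s ^ 2 : ℝ) : ℂ) • (1 : H →L[ℂ] H) + ζ₁) ∧
     star η₂ * η₂ = (1 - ζ₂) * (((s ^ 2 : ℝ) : ℂ) • (1 : H →L[ℂ] H) + ζ₂)) ∧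
    (η₁ * star η₁ = (1 - (((q : ℂ) ^ 2)⁻¹) • ζ₁) *
        (((s ^ 2 : ℝ) : ℂ) • (1 : H →L[ℂ] H) + (((q : ℂ) ^ 2)⁻¹) • ζ₁) ∧
     η₂ * star η₂ = (1 - (((q : ℂ) ^ 2)⁻¹) • ζ₂) *
        (((s ^ 2 : ℝ) : ℂ) • (1 : H →L[ℂ] H) + (((q : ℂ) ^ 2)⁻¹) • ζ₂)) ∧
    (IsCompactOperator ⇑ζ₁ ∧ IsCompactOperator ⇑ζ₂ ∧
     IsCompactOperator ⇑(η₁ - (s : ℂ) • S) ∧ IsCompactOperator ⇑(η₂ - (s : ℂ) • S)) ∧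
    (ζ₁ ∈ StarAlgebra.elemental ℂ S ∧ ζ₂ ∈ StarAlgebra.elemental ℂ S ∧
     η₁ ∈ StarAlgebra.elemental ℂ S ∧ η₂ ∈ StarAlgebra.elemental ℂ S) ∧
    (IsCompactOperator ⇑(ζ₁ - ζ₂) ∧ IsCompactOperator ⇑(η₁ - η₂)) := by
  obtain ⟨hq0, hq1⟩ := hq
  obtain ⟨hs0, hs1⟩ := hs
  have hx0 : ∀ n : ℕ, 0 < q ^ (2 * n + 2) := fun n => by positivity
  have hx1 : ∀ n : ℕ, q ^ (2 * n + 2) < 1 := fun n => pow_lt_one₀ hq0.le hq1 (by omega)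
  have hxs : Summable fun n : ℕ => q ^ (2 * n + 2) := by
    have h := (summable_geometric_of_lt_one (sq_nonneg q)
      (pow_lt_one₀ hq0.le hq1 two_ne_zero)).mul_right (q ^ 2)
    refine h.congr fun n => ?_
    rw [pow_add, pow_mul]
  have hss : s ^ 2 ≤ 1 := pow_le_one₀ hs0.le hs1
  have hss0 : 0 < s ^ 2 := by positivity
  have hu₁ : ∀ n : ℕ, 0 ≤ (1 - q ^ (2 * n + 2)) * (1 + s ^ 2 * q ^ (2 * n + 2)) := fun n =>
    mul_nonneg (by linarith [hx1 n]) (by have := hx0 n; positivity)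
  have hu₂ : ∀ n : ℕ, 0 ≤ (1 - q ^ (2 * n + 2)) * (s ^ 2 + q ^ (2 * n + 2)) := fun n =>
    mul_nonneg (by linarith [hx1 n]) (by have := hx0 n; positivity)
  obtain ⟨a1, a2, a3, a4⟩ := relations e _ _ q s hq0.ne' hζ₁ hη₁
    (fun n => by ring)
    (fun n => by rw [mul_pow, Real.sq_sqrt (hu₁ n)]; ring)
    (by
      have : q ≠ 0 := hq0.ne'
      field_simp
      ring)
  obtain ⟨b1, b2, b3, b4⟩ := relations e _ _ q s hq0.ne' hζ₂ hη₂
    (fun n => by ring)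
    (fun n => by rw [Real.sq_sqrt (hu₂ n)])
    (by
      have : q ≠ 0 := hq0.ne'
      field_simp
      ring)
  obtain ⟨c1, m1⟩ := compact_and_mem_of_summable e hS (A := ζ₁) _ 0 hζ₁
    (by simpa [abs_mul, abs_of_pos hq0] using hxs.mul_left (s ^ 2))
  obtain ⟨c2, m2⟩ := compact_and_mem_of_summable e hS (A := ζ₂) _ 0 hζ₂
    (by simpa [abs_of_pos hq0] using hxs)
  obtain ⟨c3, m3⟩ := compact_and_mem_of_summable e hS (A := η₁ - (s : ℂ) • S)
    (fun n => s * √((1 - q ^ (2 * n + 2)) * (1 + s ^ 2 * q ^ (2 * n + 2))) - s) 1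
    (fun n => by
      rw [sub_apply, smul_apply, hη₁, hS, ← sub_smul]
      push_cast
      rfl)
    (by
      refine Summable.of_nonneg_of_le (fun _ => abs_nonneg _) (fun n => ?_) (hxs.mul_left (s * 3))
      have h := abs_sqrt_sub_le (hu₁ n) one_pos
      have h0 := hx0 n
      have h1 := hx1 n
      rw [← mul_sub_one, abs_mul, abs_of_pos hs0, mul_assoc]
      gcongr
      refine h.trans ?_
      generalize q ^ (2 * n + 2) = x at *
      have hsx : s ^ 2 * x ≤ x := by nlinarith
      have hsxx : s ^ 2 * x * x ≤ x := by nlinarith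
      have p1 : 0 < s ^ 2 * x := by positivity
      have p2 : 0 < s ^ 2 * x * x := by positivity
      rw [div_one, abs_le]
      constructor <;> nlinarith)
  obtain ⟨c4, m4⟩ := compact_and_mem_of_summable e hS (A := η₂ - (s : ℂ) • S)
    (fun n => √((1 - q ^ (2 * n + 2)) * (s ^ 2 + q ^ (2 * n + 2))) - s) 1
    (fun n => by
      rw [sub_apply, smul_apply, hη₂, hS, ← sub_smul]
      push_cast
      rfl)
    (by
      refine Summable.of_nonneg_of_le (fun _ => abs_nonneg _) (fun n => ?_)
        ((hxs.mul_left 3).div_const s)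
      refine (abs_sqrt_sub_le (hu₂ n) hs0).trans ?_
      have h0 := hx0 n
      have h1 := hx1 n
      gcongr
      generalize q ^ (2 * n + 2) = x at *
      have hsx : s ^ 2 * x ≤ x := by nlinarith
      have p1 : 0 < s ^ 2 * x := by positivity
      have p2 : 0 < x * x := by positivity
      have p3 : x * x ≤ x := by nlinarith
      rw [abs_le]
      constructor <;> nlinarith)
  have hSm : (s : ℂ) • S ∈ StarAlgebra.elemental ℂ S :=
    (StarAlgebra.elemental ℂ S).smul_mem (StarAlgebra.elemental.self_mem ℂ S) _
  refine ⟨⟨a1, b1⟩, ⟨a2, b2⟩, ⟨a3, b3⟩, ⟨a4, b4⟩, ⟨c1, c2, c3, c4⟩, ⟨m1, m2, ?_, ?_⟩, c1.sub c2, ?_⟩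
  · simpa using add_mem m3 hSm
  · simpa using add_mem m4 hSm
  · simpa [Pi.sub_def] using c3.sub c4
end
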